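/- arXiv:2308.12012 — 10 statements merged into one kernel-verified Lean document; each statement's English description precedes it below -/
import Mathlib

section
/- On the plane ℝ² equipped with the river metric d*, there exists a mapping W : ℝ² × ℝ² × [0,1] → ℝ² such that for all v₁, v₂ ∈ ℝ² and all λ ∈ [0,1] one has d*(W(v₁,v₂,λ), v₁) = (1−λ)·d*(v₁,v₂) and d*(W(v₁,v₂,λ), v₂) = λ·d*(v₁,v₂), and moreover for every u ∈ ℝ², d*(u, W(v₁,v₂,λ)) ≤ λ·d*(u,v₁) + (1−λ)·d*(u,v₂). In particular, (ℝ², d*) is a W-convex metric space in the sense of Takahashi. -/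
/-- The river metric on ℝ². -/
noncomputable def riverDist (u v : ℝ × ℝ) : ℝ :=
  if u.1 = v.1 then |u.2 - v.2| else |u.2| + |v.2| + |u.1 - v.1|

/-- The metric segment between two points of ℝ² with the river metric. -/
def riverSegment (u v : ℝ × ℝ) : Set (ℝ × ℝ) :=
  {z | riverDist u z + riverDist z v = riverDist u v}

/-- A set is convex (w.r.t. the river metric) if it contains all metric segments
between its points. -/
def IsRiverConvex (K : Set (ℝ × ℝ)) : Prop :=
  ∀ u ∈ K, ∀ v ∈ K, riverSegment u v ⊆ K

/-- `m` is a midpoint of `u` and `v` for the river metric. -/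
def IsRiverMidpoint (u v m : ℝ × ℝ) : Prop :=
  riverDist u m = riverDist u v / 2 ∧ riverDist m v = riverDist u v / 2

lemma real4 (a b c d : ℝ) :
    |a - b| + |c - d| ≤ |a - c| + |b - d| ∨ |a - b| + |c - d| ≤ |a - d| + |b - c| := by
  by_contra! h
  grind

lemma riverDist_eq {u v : ℝ × ℝ} (h : u.1 = v.1) : riverDist u v = |u.2 - v.2| := by
  simp [riverDist, h]

lemma riverDist_ne {u v : ℝ × ℝ} (h : u.1 ≠ v.1) :
    riverDist u v = |u.2| + |v.2| + |u.1 - v.1| := by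
  simp [riverDist, h]

lemma riverDist_comm (u v : ℝ × ℝ) : riverDist u v = riverDist v u := by
  unfold riverDist
  grind

lemma river_tri (u v w : ℝ × ℝ) : riverDist u w ≤ riverDist u v + riverDist v w := by
  unfold riverDist
  grind

lemma river4 (u w p q : ℝ × ℝ) :
    riverDist u w + riverDist p q ≤ riverDist u p + riverDist w q ∨
    riverDist u w + riverDist p q ≤ riverDist u q + riverDist w p := by
  obtain ⟨a, a'⟩ := u
  obtain ⟨b, b'⟩ := w
  obtain ⟨c, c'⟩ := p
  obtain ⟨d, d'⟩ := q
  have hx := real4 a b c d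
  have h0 := real4 a' b' c' d'
  have h1 := real4 a' b' c' 0
  have h2 := real4 a' b' 0 d'
  have h3 := real4 a' 0 c' d'
  have h4 := real4 0 b' c' d'
  have t1 := abs_sub a' b'
  have t2 := abs_sub c' d'
  simp only [sub_zero, zero_sub, abs_neg] at h1 h2 h3 h4
  simp only [riverDist]
  by_cases e1 : a = b <;> by_cases e2 : a = c <;> by_cases e3 : a = d <;>
  by_cases e4 : b = c <;> by_cases e5 : b = d <;> by_cases e6 : c = d <;>
  first
  | (exfalso; grind)
  | (simp only [e1, e2, e3, e4, e5, e6, if_true, if_false, sub_self, abs_zero] at *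
     grind)

lemma river_conv (v₁ v₂ w : ℝ × ℝ) (l : ℝ) (hl : l ∈ Set.Icc (0:ℝ) 1)
    (h1 : riverDist w v₁ = (1 - l) * riverDist v₁ v₂)
    (h2 : riverDist w v₂ = l * riverDist v₁ v₂) (u : ℝ × ℝ) :
    riverDist u w ≤ l * riverDist u v₁ + (1 - l) * riverDist u v₂ := by
  obtain ⟨h0, h1'⟩ := hl
  have t1 := river_tri u v₂ v₁
  have t2 := river_tri u v₁ v₂
  rw [riverDist_comm v₂ v₁] at t1
  rcases river4 u w v₁ v₂ with h | h
  · nlinarith [mul_le_mul_of_nonneg_left t1 (sub_nonneg.2 h1')]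
  · nlinarith [mul_le_mul_of_nonneg_left t2 h0]

lemma river_exists (v₁ v₂ : ℝ × ℝ) (l : ℝ) (hl : l ∈ Set.Icc (0:ℝ) 1) :
    ∃ w, riverDist w v₁ = (1 - l) * riverDist v₁ v₂ ∧
      riverDist w v₂ = l * riverDist v₁ v₂ := by
  obtain ⟨a, b⟩ := v₁
  obtain ⟨c, d⟩ := v₂
  obtain ⟨h0, h1⟩ := hl
  have h1' : 0 ≤ 1 - l := by linarith
  -- a point on the vertical line at distance t from (a,b) towards the river
  have key : ∀ b t : ℝ, 0 ≤ t → t ≤ |b| → ∃ y : ℝ, |y - b| = t ∧ |y| = |b| - t := by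
    intro b t ht hb
    rcases le_total 0 b with h | h
    · exact ⟨b - t, by grind, by grind⟩
    · exact ⟨b + t, by grind, by grind⟩
  by_cases hac : a = c
  · subst hac
    refine ⟨(a, l * b + (1 - l) * d), ?_, ?_⟩ <;> simp only [riverDist, if_true]
    · rw [show l * b + (1 - l) * d - b = (1 - l) * (d - b) by ring, abs_mul, abs_of_nonneg h1',
        abs_sub_comm]
    · rw [show l * b + (1 - l) * d - d = l * (b - d) by ring, abs_mul, abs_of_nonneg h0]
  · have hD : riverDist (a, b) (c, d) = |b| + |d| + |a - c| := by simp [riverDist, hac]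
    have hD0 : 0 ≤ riverDist (a, b) (c, d) := by rw [hD]; positivity
    set D := riverDist (a, b) (c, d) with hDdef
    have ht := mul_nonneg h1' hD0
    have hs := mul_nonneg h0 hD0
    have hts : (1 - l) * D + l * D = D := by ring
    generalize (1 - l) * D = t at *
    generalize l * D = s at *
    by_cases hb : t ≤ |b|
    · obtain ⟨y, hy1, hy2⟩ := key b t ht hb
      exact ⟨(a, y), by simp [riverDist, hy1], by simp [riverDist, hac, hy2]; linarith⟩
    by_cases hd : s ≤ |d|
    · obtain ⟨y, hy1, hy2⟩ := key d s hs hd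
      refine ⟨(c, y), ?_, by simp [riverDist, hy1]⟩
      simp [riverDist, Ne.symm hac, hy2, abs_sub_comm c a]; linarith
    push Not at hb hd
    have hx : ∃ x : ℝ, |x - a| = t - |b| ∧ |x - c| = s - |d| := by
      rcases lt_or_gt_of_ne hac with h | h
      · have e : |a - c| = c - a := by rw [abs_of_neg (by linarith)]; ring
        refine ⟨a + (t - |b|), ?_, ?_⟩
        · rw [abs_of_nonneg] <;> linarith
        · rw [abs_of_nonpos] <;> linarith
      · have e : |a - c| = a - c := abs_of_pos (by linarith)
        refine ⟨a - (t - |b|), ?_, ?_⟩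
        · rw [abs_of_nonpos] <;> linarith
        · rw [abs_of_nonneg] <;> linarith
    obtain ⟨x, hx1, hx2⟩ := hx
    have n1 : x ≠ a := fun h => by
      rw [h, sub_self, abs_zero] at hx1; linarith
    have n2 : x ≠ c := fun h => by
      rw [h, sub_self, abs_zero] at hx2; linarith
    exact ⟨(x, 0), by simp [riverDist, n1, hx1], by simp [riverDist, n2, hx2]⟩

/-- (ℝ², d*) is a W-convex metric space in the sense of Takahashi: there is a
convex structure `W` realizing the prescribed distances. -/
theorem river_W_convex_structure :
    ∃ W : ℝ × ℝ → ℝ × ℝ → ℝ → ℝ × ℝ,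
      ∀ v₁ v₂ : ℝ × ℝ, ∀ lam ∈ Set.Icc (0:ℝ) 1,
        riverDist (W v₁ v₂ lam) v₁ = (1 - lam) * riverDist v₁ v₂ ∧
        riverDist (W v₁ v₂ lam) v₂ = lam * riverDist v₁ v₂ ∧
        ∀ u : ℝ × ℝ,
          riverDist u (W v₁ v₂ lam) ≤
            lam * riverDist u v₁ + (1 - lam) * riverDist u v₂ := by
  have h : ∀ v₁ v₂ : ℝ × ℝ, ∀ l : ℝ, ∃ w, l ∈ Set.Icc (0:ℝ) 1 →
      riverDist w v₁ = (1 - l) * riverDist v₁ v₂ ∧ riverDist w v₂ = l * riverDist v₁ v₂ := by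
    intro v₁ v₂ l
    by_cases hl : l ∈ Set.Icc (0:ℝ) 1
    · obtain ⟨w, hw⟩ := river_exists v₁ v₂ l hl
      exact ⟨w, fun _ => hw⟩
    · exact ⟨v₁, fun h => absurd h hl⟩
  choose W hW using h
  exact ⟨W, fun v₁ v₂ l hl => ⟨(hW v₁ v₂ l hl).1, (hW v₁ v₂ l hl).2,
    river_conv v₁ v₂ _ l hl (hW v₁ v₂ l hl).1 (hW v₁ v₂ l hl).2⟩⟩
end

section
/- Let v₁ = (x₁,y₁) and v₂ = (x₂,y₂) be points of ℝ² with x₁ ≠ x₂ and y₁ ≥ 0, let d = d*(v₁,v₂), and let λ ∈ [0,1] satisfy λ ≥ 1 − y₁/d. Then the point z = (x₁, λ·y₁ − (1−λ)·(|y₂| + |x₁−x₂|)) satisfies d*(z, v₁) = (1−λ)·d and d*(z, v₂) = λ·d. -/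
theorem river_W_case_a (x₁ y₁ x₂ y₂ : ℝ) (hx : x₁ ≠ x₂) (hy : 0 ≤ y₁)
    (lam : ℝ) (hlam : lam ∈ Set.Icc (0:ℝ) 1)
    (hge : 1 - y₁ / riverDist (x₁, y₁) (x₂, y₂) ≤ lam) :
    riverDist (x₁, lam * y₁ - (1 - lam) * (|y₂| + |x₁ - x₂|)) (x₁, y₁) =
      (1 - lam) * riverDist (x₁, y₁) (x₂, y₂) ∧
    riverDist (x₁, lam * y₁ - (1 - lam) * (|y₂| + |x₁ - x₂|)) (x₂, y₂) =
      lam * riverDist (x₁, y₁) (x₂, y₂) := by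
  obtain ⟨h0, h1⟩ := hlam
  have hd : riverDist (x₁, y₁) (x₂, y₂) = y₁ + |y₂| + |x₁ - x₂| := by
    simp [riverDist, hx, abs_of_nonneg hy]
  rw [hd] at hge ⊢
  have hp : 0 < |x₁ - x₂| := abs_pos.mpr (sub_ne_zero.mpr hx)
  have hq : 0 ≤ |y₂| := abs_nonneg _
  have hD : 0 < y₁ + |y₂| + |x₁ - x₂| := by linarith
  have hm : (1 - lam) * (y₁ + |y₂| + |x₁ - x₂|) ≤ y₁ := by
    rw [← le_div_iff₀ hD]
    linarith
  have hz : 0 ≤ lam * y₁ - (1 - lam) * (|y₂| + |x₁ - x₂|) := by linarith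
  constructor
  · have hn : 0 ≤ (1 - lam) * (y₁ + |y₂| + |x₁ - x₂|) :=
      mul_nonneg (by linarith) hD.le
    simp only [riverDist, if_true]
    rw [abs_of_nonpos (by linarith)]
    ring
  · simp only [riverDist, if_neg hx]
    rw [abs_of_nonneg hz]
    ring
end

section
/- Let D be a nonempty subset of ℝ² (with the river metric d*) which is not of the form {x₀} × I for some x₀ ∈ ℝ and some interval I ⊆ ℝ with 0 ∉ I (the paper phrases this as: D is not a ball of (ℝ²,d*)). Then D is convex if and only if both of the following hold: (i) for every point (x,y) ∈ D, the metric segment [(x,0),(x,y)], i.e. the vertical segment {(x,a) : a between 0 and y}, is contained in D; (ii) for all points (x₁,y₁), (x₂,y₂) ∈ D and every real t between x₁ and x₂, the point (t,0) belongs to D (equivalently, [a,b] × {0} ⊆ D, where a and b are the infimum and supremum of the first coordinates of points of D). -/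
theorem river_mem_vert (D : Set (ℝ × ℝ)) (h : ∀ p ∈ D, riverSegment (p.1, 0) p ⊆ D)
    (x y b : ℝ) (hp : (x, y) ∈ D) (hb : |b| + |b - y| = |y|) : (x, b) ∈ D := by
  apply h _ hp
  simp [riverSegment, riverDist, hb]

theorem river_between (a b c : ℝ) (h : |a - c| + |c - b| = |a - b|) :
    |c| + |c - a| = |a| ∨ |c| + |c - b| = |b| := by
  grind

theorem river_mid (a e c : ℝ) (h : |a - e| + |e - c| = |a - c|) :
    a ≤ e ∧ e ≤ c ∨ c ≤ e ∧ e ≤ a := by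
  grind

theorem river_foot (D : Set (ℝ × ℝ))
    (hnotball : ¬ ∃ (x₀ : ℝ) (I : Set ℝ), I.OrdConnected ∧ (0:ℝ) ∉ I ∧
      D = {x₀} ×ˢ I) (hD : IsRiverConvex D) (x y : ℝ) (hp : (x, y) ∈ D) : (x, (0:ℝ)) ∈ D := by
  by_cases hq : ∃ q ∈ D, q.1 ≠ x
  · obtain ⟨⟨a, b⟩, hq, hne⟩ := hq
    apply hD _ hp _ hq
    have : x ≠ a := fun h => hne h.symm
    simp [riverSegment, riverDist, this]
    ring
  · push Not at hq
    by_contra h0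
    apply hnotball
    refine ⟨x, {t | (x, t) ∈ D}, ⟨?_⟩, h0, ?_⟩
    · intro a ha b hb c hc
      apply hD _ ha _ hb
      obtain ⟨h1, h2⟩ := hc
      simp only [riverSegment, riverDist, Set.mem_ofPred_eq, if_true]
      grind
    · ext ⟨a, b⟩
      simp only [Set.mem_prod, Set.mem_singleton_iff, Set.mem_ofPred_eq]
      constructor
      · intro h
        have := hq _ h
        simp only at this
        subst this
        exact ⟨rfl, h⟩
      · rintro ⟨rfl, h⟩
        exact h

/-- Characterization of convex sets in (ℝ², d*) which are not balls, i.e. not of the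
form {x₀} × I for an interval I not containing 0. -/
theorem river_convex_characterization (D : Set (ℝ × ℝ)) (hne : D.Nonempty)
    (hnotball : ¬ ∃ (x₀ : ℝ) (I : Set ℝ), I.OrdConnected ∧ (0:ℝ) ∉ I ∧
      D = {x₀} ×ˢ I) :
    IsRiverConvex D ↔
      ((∀ p ∈ D, riverSegment (p.1, 0) p ⊆ D) ∧
        (∀ p ∈ D, ∀ q ∈ D, ∀ t ∈ Set.uIcc p.1 q.1, ((t, (0:ℝ)) : ℝ × ℝ) ∈ D)) := by
  constructor
  · intro hD
    have hf := river_foot D hnotball hD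
    refine ⟨fun p hp => hD _ (hf p.1 p.2 hp) _ hp, ?_⟩
    rintro ⟨x, y⟩ hp ⟨x', y'⟩ hq t ht
    have h1 := hf _ _ hp
    have h2 := hf _ _ hq
    apply hD _ h1 _ h2
    rw [Set.mem_uIcc] at ht
    simp only [riverSegment, riverDist, Set.mem_ofPred_eq] at ht ⊢
    grind
  · rintro ⟨h1, h2⟩ ⟨a, b⟩ hu ⟨c, d⟩ hv ⟨e, f⟩ hz
    have hm := river_mem_vert D h1
    simp only [riverSegment, riverDist, Set.mem_ofPred_eq] at hz
    have hbet := river_between b d f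
    by_cases hac : a = c
    · subst hac
      by_cases hae : a = e
      · subst hae
        simp only [if_true] at hz
        rcases hbet hz with h | h
        · exact hm _ _ _ hu h
        · exact hm _ _ _ hv h
      · exfalso
        have hea : e ≠ a := fun h => hae h.symm
        simp only [if_true, if_neg hae, if_neg hea] at hz
        have h3 := abs_sub b d
        have h4 := abs_nonneg f
        have h5 := abs_nonneg (e - a)
        have h6 := abs_pos.2 (sub_ne_zero.2 hae)
        linarith
    · by_cases hae : a = e
      · subst hae
        apply hm _ _ _ hu
        simp only [if_true, if_neg hac] at hz
        rw [abs_sub_comm f b]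
        linarith
      · by_cases hec : e = c
        · subst hec
          apply hm _ _ _ hv
          simp only [if_true, if_neg hac] at hz
          linarith
        · simp only [if_neg hac, if_neg hae, if_neg hec] at hz
          have h3 := abs_sub_le a e c
          have h4 := abs_nonneg f
          have hf : f = 0 := abs_eq_zero.1 (by linarith)
          subst hf
          apply h2 _ hu _ hv
          rw [Set.mem_uIcc]
          exact river_mid a e c (by linarith [abs_zero (α := ℝ)])
end

section
/- For all real numbers a, b, c, d with a ≤ b, c ≤ 0 and d ≥ 0, the rectangle K = [a,b] × [c,d] is a convex subset of ℝ² with the river metric d*: for all u, v ∈ K, the metric segment [u,v] is contained in K. -/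
theorem river_btw (c d u v z : ℝ) (h1 : c ≤ u) (h2 : u ≤ d) (h3 : c ≤ v) (h4 : v ≤ d)
    (h : |u - z| + |z - v| ≤ |u - v|) : c ≤ z ∧ z ≤ d := by
  have a1 := le_abs_self (u - z)
  have a2 := neg_abs_le (u - z)
  have a3 := le_abs_self (z - v)
  have a4 := neg_abs_le (z - v)
  rcases abs_cases (u - v) with ⟨e, _⟩ | ⟨e, _⟩ <;> constructor <;> linarith

theorem river_rectangle_convex (a b c d : ℝ) (hab : a ≤ b) (hc : c ≤ 0) (hd : 0 ≤ d) :
    IsRiverConvex (Set.Icc a b ×ˢ Set.Icc c d) := by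
  rintro ⟨p, q⟩ ⟨⟨h1, h2⟩, h3, h4⟩ ⟨r, s⟩ ⟨⟨h5, h6⟩, h7, h8⟩ ⟨x, y⟩ hz
  change riverDist (p, q) (x, y) + riverDist (x, y) (r, s) = riverDist (p, q) (r, s) at hz
  simp only [riverDist] at hz
  simp only at h1 h2 h3 h4 h5 h6 h7 h8
  change (a ≤ x ∧ x ≤ b) ∧ c ≤ y ∧ y ≤ d
  have hy := abs_nonneg y
  by_cases k1 : p = x
  · subst k1
    refine ⟨⟨h1, h2⟩, ?_⟩
    by_cases k2 : p = r
    · subst k2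
      simp only [if_true] at hz
      exact river_btw c d q s y h3 h4 h7 h8 hz.le
    · simp only [if_true, if_neg k2] at hz
      refine river_btw c d q 0 y h3 h4 hc hd ?_
      rw [sub_zero, sub_zero]
      linarith
  · by_cases k2 : x = r
    · subst k2
      refine ⟨⟨h5, h6⟩, ?_⟩
      simp only [if_true, if_neg k1] at hz
      refine river_btw c d 0 s y hc hd h7 h8 ?_
      rw [zero_sub, zero_sub, abs_neg, abs_neg]
      linarith
    · by_cases k3 : p = r
      · exfalso
        simp only [if_neg k1, if_neg k2, if_pos k3] at hz
        have t := abs_sub q s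
        have t1 := abs_pos.mpr (sub_ne_zero.mpr k1)
        have t2 := abs_nonneg (x - r)
        linarith
      · simp only [if_neg k1, if_neg k2, if_neg k3] at hz
        have t := abs_sub_le p x r
        refine ⟨river_btw a b p r x h1 h2 h5 h6 (by linarith), ?_⟩
        have y0 : y = 0 := abs_eq_zero.mp (by linarith)
        rw [y0]
        exact ⟨hc, hd⟩
end

section
/- Let A, B ⊆ ℝ² (with the river metric d*) be convex sets such that A ∩ B ≠ ∅. Then A ∪ B is a convex set. -/
def RBtw (a b c : ℝ) : Prop := (a ≤ b ∧ b ≤ c) ∨ (c ≤ b ∧ b ≤ a)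

theorem rbtw_iff (a b c : ℝ) : |a - b| + |b - c| = |a - c| ↔ RBtw a b c := by
  unfold RBtw
  constructor
  · intro h
    rcases abs_cases (a - b) with h1 | h1 <;> rcases abs_cases (b - c) with h2 | h2 <;>
    rcases abs_cases (a - c) with h3 | h3 <;>
    first
    | (left; constructor <;> linarith)
    | (right; constructor <;> linarith)
  · rintro (⟨h1, h2⟩ | ⟨h1, h2⟩)
    · rw [abs_of_nonpos (by linarith), abs_of_nonpos (by linarith), abs_of_nonpos (by linarith)]
      ring
    · rw [abs_of_nonneg (by linarith), abs_of_nonneg (by linarith), abs_of_nonneg (by linarith)]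
      ring

theorem mem_seg (a b c d x y : ℝ) : (x, y) ∈ riverSegment (a, b) (c, d) ↔
    (a = c ∧ x = a ∧ RBtw b y d) ∨ (a ≠ c ∧ ((x = a ∧ RBtw b y 0) ∨ (x = c ∧ RBtw 0 y d) ∨
      (y = 0 ∧ RBtw a x c))) := by
  simp only [riverSegment, riverDist, Set.mem_ofPred_eq]
  have t1 := abs_sub_le a x c
  have n1 := abs_nonneg y
  by_cases hac : a = c
  · subst hac
    by_cases hx : a = x
    · subst hx
      simp [rbtw_iff]
    · have hx' : ¬ x = a := fun h => hx h.symm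
      simp only [hx, hx', if_false, if_true, true_and, false_and, ne_eq, not_true, or_self, iff_false]
      have := abs_pos.2 (sub_ne_zero.2 hx)
      have := abs_pos.2 (sub_ne_zero.2 hx')
      have := abs_sub b d
      intro h
      linarith
  · by_cases hx : a = x
    · subst hx
      have e := rbtw_iff b y 0
      simp only [sub_zero] at e
      simp only [hac, if_false, if_true, true_and, false_and, ne_eq, not_false_iff, false_or]
      rw [← e]
      constructor
      · intro h
        left; linarith
      · rintro (h | ⟨h, -⟩)
        · linarith
        · subst h; simp; ring
    · by_cases hx2 : x = c
      · subst hx2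
        have e := rbtw_iff 0 y d
        simp only [zero_sub, abs_neg] at e
        have hx' : ¬ x = a := fun h => hx h.symm
        simp only [hx, hx', if_false, if_true, true_and, false_and, ne_eq, not_false_iff, false_or]
        rw [← e]
        constructor
        · intro h
          left; linarith
        · rintro (h | ⟨h, -⟩)
          · linarith
          · subst h; simp; ring
      · have hx' : ¬ x = a := fun h => hx h.symm
        simp only [hx, hx', hx2, hac, if_false, true_and, false_and, ne_eq, not_false_iff, false_or]
        rw [← rbtw_iff, ← abs_eq_zero]
        constructor
        · intro h
          constructor <;> linarith
        · rintro ⟨h, h'⟩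
          linarith

theorem rbtw_split (a b c e : ℝ) (h : RBtw a b c) : RBtw a b e ∨ RBtw e b c := by
  unfold RBtw at *
  have := le_total e b
  tauto

theorem rbtw_same (a b : ℝ) (h : RBtw a b a) : b = a := by
  rcases h with ⟨h1, h2⟩ | ⟨h1, h2⟩ <;> linarith

theorem rbtw_left (a b : ℝ) : RBtw a a b := by
  have := le_total a b
  simpa [RBtw] using this

theorem rbtw_right (a b : ℝ) : RBtw a b b := by
  have := le_total a b
  simpa [RBtw] using this

theorem seg_tree (u v w z : ℝ × ℝ) (h : z ∈ riverSegment u v) :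
    z ∈ riverSegment u w ∨ z ∈ riverSegment w v := by
  obtain ⟨a, b⟩ := u
  obtain ⟨c, d⟩ := v
  obtain ⟨e, f⟩ := w
  obtain ⟨x, y⟩ := z
  rw [mem_seg] at h
  rw [mem_seg, mem_seg]
  rcases h with ⟨rfl, rfl, h⟩ | ⟨hac, ⟨rfl, h⟩ | ⟨rfl, h⟩ | ⟨rfl, h⟩⟩
  · by_cases he : x = e
    · subst he
      have := rbtw_split _ _ _ f h
      tauto
    · have := rbtw_split _ _ _ 0 h
      have he' : e ≠ x := Ne.symm he
      tauto
  · by_cases he : x = e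
    · subst he
      have := rbtw_split _ _ _ f h
      tauto
    · tauto
  · by_cases he : e = x
    · subst he
      have := rbtw_split _ _ _ f h
      tauto
    · tauto
  · rcases rbtw_split _ _ _ e h with h1 | h1
    · by_cases he : a = e
      · subst he
        exact Or.inr (Or.inr ⟨hac, Or.inl ⟨rbtw_same _ _ h1, rbtw_right f 0⟩⟩)
      · exact Or.inl (Or.inr ⟨he, Or.inr (Or.inr ⟨rfl, h1⟩)⟩)
    · by_cases he : e = c
      · subst he
        exact Or.inl (Or.inr ⟨hac, Or.inr (Or.inl ⟨rbtw_same _ _ h1, rbtw_left 0 f⟩)⟩)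
      · exact Or.inr (Or.inr ⟨he, Or.inr (Or.inr ⟨rfl, h1⟩)⟩)

theorem river_union_convex (A B : Set (ℝ × ℝ)) (hA : IsRiverConvex A)
    (hB : IsRiverConvex B) (hAB : (A ∩ B).Nonempty) :
    IsRiverConvex (A ∪ B) := by
  obtain ⟨w, wA, wB⟩ := hAB
  rintro u (hu | hu) v (hv | hv) z hz
  · exact Or.inl (hA u hu v hv hz)
  · rcases seg_tree u v w z hz with h | h
    · exact Or.inl (hA u hu w wA h)
    · exact Or.inr (hB w wB v hv h)
  · rcases seg_tree u v w z hz with h | h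
    · exact Or.inr (hB u hu w wB h)
    · exact Or.inl (hA w wA v hv h)
  · exact Or.inr (hB u hu v hv hz)
end

section
/- The space (ℝ², d*) is totally convex: for any two distinct points v₁, v₂ ∈ ℝ² and any positive real numbers a, b with d*(v₁,v₂) = a + b, there exists a point v ∈ ℝ² such that d*(v₁,v) = a and d*(v,v₂) = b. -/
/-- (ℝ², d*) is totally convex. -/
theorem river_totally_convex :
    ∀ v₁ v₂ : ℝ × ℝ, v₁ ≠ v₂ → ∀ a b : ℝ, 0 < a → 0 < b →
      riverDist v₁ v₂ = a + b →
      ∃ v : ℝ × ℝ, riverDist v₁ v = a ∧ riverDist v v₂ = b := by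
  rintro ⟨x₁, y₁⟩ ⟨x₂, y₂⟩ _ a b ha hb h
  by_cases hx : x₁ = x₂
  · subst hx
    simp only [riverDist, if_true] at h
    rcases le_total 0 (y₁ - y₂) with hy | hy
    · rw [abs_of_nonneg hy] at h
      refine ⟨(x₁, y₁ - a), ?_, ?_⟩
      · simp [riverDist, abs_of_pos ha]
      · have : y₁ - a - y₂ = b := by linarith
        simp [riverDist, this, abs_of_pos hb]
    · rw [abs_of_nonpos hy] at h
      refine ⟨(x₁, y₁ + a), ?_, ?_⟩
      · simp [riverDist, abs_of_pos ha]
      · have : y₁ + a - y₂ = -b := by linarith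
        simp [riverDist, this, abs_of_pos hb]
  · simp only [riverDist, if_neg hx] at h
    by_cases h1 : a ≤ |y₁|
    · rcases le_total 0 y₁ with hy | hy
      · rw [abs_of_nonneg hy] at h h1
        refine ⟨(x₁, y₁ - a), ?_, ?_⟩
        · simp [riverDist, abs_of_pos ha]
        · simp only [riverDist, if_neg hx]
          rw [abs_of_nonneg (by linarith : 0 ≤ y₁ - a)]
          linarith
      · rw [abs_of_nonpos hy] at h h1
        refine ⟨(x₁, y₁ + a), ?_, ?_⟩
        · simp [riverDist, abs_of_pos ha]
        · simp only [riverDist, if_neg hx]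
          rw [abs_of_nonpos (by linarith : y₁ + a ≤ 0)]
          linarith
    by_cases h2 : b ≤ |y₂|
    · rcases le_total 0 y₂ with hy | hy
      · rw [abs_of_nonneg hy] at h h2
        refine ⟨(x₂, y₂ - b), ?_, ?_⟩
        · simp only [riverDist, if_neg hx]
          rw [abs_of_nonneg (by linarith : 0 ≤ y₂ - b)]
          linarith
        · simp [riverDist, abs_of_pos hb]
      · rw [abs_of_nonpos hy] at h h2
        refine ⟨(x₂, y₂ + b), ?_, ?_⟩
        · simp only [riverDist, if_neg hx]
          rw [abs_of_nonpos (by linarith : y₂ + b ≤ 0)]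
          linarith
        · simp [riverDist, abs_of_pos hb]
    push Not at h1 h2
    rcases le_total 0 (x₁ - x₂) with hd | hd
    · rw [abs_of_nonneg hd] at h
      refine ⟨(x₁ - (a - |y₁|), 0), ?_, ?_⟩
      · have e : x₁ ≠ x₁ - (a - |y₁|) := by intro e; linarith
        simp only [riverDist, if_neg e, abs_zero]
        rw [abs_of_nonneg (by linarith : 0 ≤ x₁ - (x₁ - (a - |y₁|)))]
        ring
      · have e : x₁ - (a - |y₁|) ≠ x₂ := by intro e; linarith
        simp only [riverDist, if_neg e, abs_zero]
        rw [abs_of_nonneg (by linarith : 0 ≤ x₁ - (a - |y₁|) - x₂)]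
        linarith
    · rw [abs_of_nonpos hd] at h
      refine ⟨(x₁ + (a - |y₁|), 0), ?_, ?_⟩
      · have e : x₁ ≠ x₁ + (a - |y₁|) := by intro e; linarith
        simp only [riverDist, if_neg e, abs_zero]
        rw [abs_of_nonpos (by linarith : x₁ - (x₁ + (a - |y₁|)) ≤ 0)]
        ring
      · have e : x₁ + (a - |y₁|) ≠ x₂ := by intro e; linarith
        simp only [riverDist, if_neg e, abs_zero]
        rw [abs_of_nonpos (by linarith : x₁ + (a - |y₁|) - x₂ ≤ 0)]
        linarith
end

section
/- The space (ℝ², d*) is strictly ball convex: for all x, y, z ∈ ℝ² with x ≠ y and every midpoint m of x and y (that is, every m ∈ ℝ² with d*(x,m) = d*(m,y) = d*(x,y)/2), one has the strict inequality d*(m, z) < max{d*(x,z), d*(y,z)}. -/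
theorem river_line4 (m z x y : ℝ) :
    |m - z| + |x - y| ≤ |x - m| + |y - z| ∨ |m - z| + |x - y| ≤ |m - y| + |x - z| := by
  rcases abs_cases (m - z) with h1 | h1 <;> rcases abs_cases (x - y) with h2 | h2 <;>
    by_contra! h <;>
    linarith [h.1, h.2, le_abs_self (x - m), le_abs_self (y - z), le_abs_self (m - y),
      le_abs_self (x - z), neg_abs_le (x - m), neg_abs_le (y - z), neg_abs_le (m - y),
      neg_abs_le (x - z)]

theorem river_four (m z x y : ℝ × ℝ) :
    riverDist m z + riverDist x y ≤ riverDist x m + riverDist y z ∨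
    riverDist m z + riverDist x y ≤ riverDist m y + riverDist x z := by
  obtain ⟨m1, m2⟩ := m
  obtain ⟨z1, z2⟩ := z
  obtain ⟨x1, x2⟩ := x
  obtain ⟨y1, y2⟩ := y
  have tri : ∀ a b : ℝ, |a - b| ≤ |a| + |b| := fun a b => abs_sub a b
  have e1 := tri m2 z2
  have e2 := tri x2 y2
  have L1 := river_line4 m1 z1 x1 y1
  have L2 := river_line4 m2 z2 x2 y2
  have A1 := river_line4 0 z2 x2 y2
  have A2 := river_line4 m2 0 x2 y2
  have A3 := river_line4 m2 z2 0 y2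
  have A4 := river_line4 m2 z2 x2 0
  simp only [sub_zero, zero_sub, abs_neg] at A1 A2 A3 A4
  have n1 := abs_nonneg m2
  have n2 := abs_nonneg z2
  have n3 := abs_nonneg x2
  have n4 := abs_nonneg y2
  have t1 := abs_sub_le m1 x1 z1
  have t2 := abs_sub_le x1 m1 y1
  have c1 := abs_sub_comm m1 x1
  have c2 := abs_sub_comm m1 y1
  have c3 := abs_sub_comm m1 z1
  have c4 := abs_sub_comm x1 y1
  have c5 := abs_sub_comm x1 z1
  have c6 := abs_sub_comm y1 z1
  simp only [riverDist]
  have zz : ∀ a : ℝ, |a - a| = 0 := fun a => by simp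
  have z1' := zz m1
  have z2' := zz z1
  have z3' := zz x1
  have z4' := zz y1
  split_ifs with h1 h2 h3 h4 h5 h6 <;>
    first
    | (subst_vars
       by_contra! h
       obtain ⟨ha, hb⟩ := h
       rcases L1 with L1 | L1 <;> rcases L2 with L2 | L2 <;> first
         | linarith
         | contradiction
         | (rcases A1 with A1 | A1 <;> linarith)
         | (rcases A2 with A2 | A2 <;> linarith)
         | (rcases A3 with A3 | A3 <;> linarith)
         | (rcases A4 with A4 | A4 <;> linarith))

/-- (ℝ², d*) is strictly ball convex. -/
theorem river_strictly_ball_convex :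
    ∀ x y z m : ℝ × ℝ, x ≠ y → IsRiverMidpoint x y m →
      riverDist m z < max (riverDist x z) (riverDist y z) := by
  intro x y z m hne ⟨h1, h2⟩
  have hpos : 0 < riverDist x y := by
    unfold riverDist
    split_ifs with h
    · exact abs_pos.2 (fun h' => hne (Prod.ext h (sub_eq_zero.1 h')))
    · have := abs_pos.2 (sub_ne_zero.2 h)
      positivity
  rw [lt_max_iff]
  rcases river_four m z x y with h | h
  · right; linarith
  · left; linarith
end

section
/- The space (ℝ², d*) is an M-space: for all x, y ∈ ℝ², writing λ = d*(x,y), and for every r ∈ [0, λ], there exists a unique point z ∈ ℝ² such that d*(x,z) = r and d*(z,y) = λ − r. -/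
theorem river_ex (p a q b r : ℝ) (h0 : 0 ≤ r) (h1 : r ≤ riverDist (p, a) (q, b)) :
    ∃ z : ℝ × ℝ, riverDist (p, a) z = r ∧
      riverDist z (q, b) = riverDist (p, a) (q, b) - r := by
  by_cases hpq : p = q
  · subst hpq
    simp only [riverDist, if_true] at h1 ⊢
    rcases le_total a b with h | h
    · refine ⟨(p, a + r), ?_⟩
      simp only [if_true]
      constructor <;> grind
    · refine ⟨(p, a - r), ?_⟩
      simp only [if_true]
      constructor <;> grind
  · simp only [riverDist, if_neg hpq] at h1 ⊢
    rcases le_or_gt r |a| with h | h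
    · rcases le_total 0 a with ha | ha
      · refine ⟨(p, a - r), ?_⟩
        simp only [if_true, if_neg hpq]
        constructor <;> grind
      · refine ⟨(p, a + r), ?_⟩
        simp only [if_true, if_neg hpq]
        constructor <;> grind
    · rcases le_or_gt (|a| + |p - q|) r with h' | h'
      · rcases le_total 0 b with hb | hb
        · refine ⟨(q, r - |a| - |p - q|), ?_⟩
          simp only [if_true, if_neg hpq]
          constructor <;> grind
        · refine ⟨(q, -(r - |a| - |p - q|)), ?_⟩
          simp only [if_true, if_neg hpq]
          constructor <;> grind
      · rcases le_total p q with hb | hb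
        · refine ⟨(p + (r - |a|), 0), ?_⟩
          have e1 : p ≠ p + (r - |a|) := by grind
          have e2 : p + (r - |a|) ≠ q := by grind
          have f0 : |p - q| = q - p := by rw [abs_of_nonpos] <;> linarith
          have f1 : |p - (p + (r - |a|))| = r - |a| := by rw [abs_of_nonpos] <;> linarith
          have f2 : |p + (r - |a|) - q| = q - p - (r - |a|) := by
            rw [abs_of_nonpos] <;> linarith
          simp only [if_neg e1, if_neg e2, f0, f1, f2, abs_zero]
          constructor <;> ring
        · refine ⟨(p - (r - |a|), 0), ?_⟩
          have e1 : p ≠ p - (r - |a|) := by grind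
          have e2 : p - (r - |a|) ≠ q := by grind
          have f0 : |p - q| = p - q := by rw [abs_of_nonneg]; linarith
          have f1 : |p - (p - (r - |a|))| = r - |a| := by rw [abs_of_nonneg] <;> linarith
          have f2 : |p - (r - |a|) - q| = p - q - (r - |a|) := by
            rw [abs_of_nonneg] <;> linarith
          simp only [if_neg e1, if_neg e2, f0, f1, f2, abs_zero]
          constructor <;> ring

/-- Every point between lies in one of three normal forms. -/
theorem river_form (p a q b r s t : ℝ) (hpq : p ≠ q)
    (h1 : riverDist (p, a) (s, t) = r)
    (h2 : riverDist (s, t) (q, b) = riverDist (p, a) (q, b) - r) :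
    (s = p ∧ r ≤ |a| ∧ |a - t| = r ∧ |t| = |a| - r) ∨
    (s = q ∧ |a| + |p - q| ≤ r ∧ |t - b| = |b| - |t| ∧ |t| = r - |a| - |p - q|) ∨
    (t = 0 ∧ |a| < r ∧ r < |a| + |p - q| ∧ |p - s| = r - |a| ∧ |s - q| = |p - q| - |p - s|) := by
  simp only [riverDist, if_neg hpq] at h1 h2
  by_cases e1 : p = s
  · subst e1
    simp only [if_true, if_neg hpq] at h1 h2
    left
    have := abs_nonneg t
    refine ⟨rfl, ?_, h1, ?_⟩ <;> linarith
  · by_cases e2 : s = q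
    · subst e2
      simp only [if_true, if_neg hpq] at h1 h2
      right; left
      have := abs_nonneg t
      refine ⟨rfl, ?_, ?_, ?_⟩ <;> linarith
    · simp only [if_neg e1, if_neg e2] at h1 h2
      right; right
      have h3 := abs_nonneg t
      have h4 := abs_sub_le p s q
      have h5 : 0 < |p - s| := abs_pos.2 (sub_ne_zero.2 e1)
      have h6 : 0 < |s - q| := abs_pos.2 (sub_ne_zero.2 e2)
      have h7 : |t| = 0 := by linarith
      refine ⟨abs_eq_zero.1 h7, ?_, ?_, ?_, ?_⟩ <;> linarith

theorem river_uniq (p a q b r s t s' t' : ℝ)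
    (h1 : riverDist (p, a) (s, t) = r)
    (h2 : riverDist (s, t) (q, b) = riverDist (p, a) (q, b) - r)
    (h3 : riverDist (p, a) (s', t') = r)
    (h4 : riverDist (s', t') (q, b) = riverDist (p, a) (q, b) - r) :
    s = s' ∧ t = t' := by
  by_cases hpq : p = q
  · subst hpq
    have key : ∀ s t : ℝ, riverDist (p, a) (s, t) = r →
        riverDist (s, t) (p, b) = riverDist (p, a) (p, b) - r →
        s = p ∧ |a - t| = r ∧ |t - b| = |a - b| - r := by
      intro s t h1 h2
      simp only [riverDist, if_true] at h1 h2
      by_cases e : p = s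
      · subst e
        simp only [if_true] at h1 h2
        exact ⟨rfl, h1, h2⟩
      · simp only [if_neg e, if_neg (Ne.symm e)] at h1 h2
        exfalso
        have h5 : 0 < |p - s| := abs_pos.2 (sub_ne_zero.2 e)
        have h6 := abs_nonneg (s - p)
        have h7 := abs_nonneg t
        have h8 := abs_sub a b
        linarith
    obtain ⟨e1, f1, g1⟩ := key s t h1 h2
    obtain ⟨e2, f2, g2⟩ := key s' t' h3 h4
    refine ⟨e1.trans e2.symm, ?_⟩
    clear h1 h2 h3 h4 key
    grind
  · have A := river_form p a q b r s t hpq h1 h2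
    have B := river_form p a q b r s' t' hpq h3 h4
    clear h1 h2 h3 h4
    have hD : 0 < |p - q| := abs_pos.2 (sub_ne_zero.2 hpq)
    rcases A with ⟨e, f, g, h⟩ | ⟨e, f, g, h⟩ | ⟨e, f, f', g, h⟩ <;>
    rcases B with ⟨e2, k, l, m⟩ | ⟨e2, k, l, m⟩ | ⟨e2, k, k', l, m⟩ <;>
    first
    | (exfalso; linarith)
    | (refine ⟨by rw [e, e2], ?_⟩; grind)
    | (refine ⟨?_, by rw [e, e2]⟩; grind)

/-- (ℝ², d*) is an M-space. -/
theorem river_M_space :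
    ∀ x y : ℝ × ℝ, ∀ r : ℝ, 0 ≤ r → r ≤ riverDist x y →
      ∃! z : ℝ × ℝ, riverDist x z = r ∧ riverDist z y = riverDist x y - r := by
  rintro ⟨p, a⟩ ⟨q, b⟩ r h0 h1
  obtain ⟨⟨s, t⟩, hz⟩ := river_ex p a q b r h0 h1
  refine ⟨(s, t), hz, ?_⟩
  rintro ⟨s', t'⟩ hw
  obtain ⟨e, f⟩ := river_uniq p a q b r s' t' s t hw.1 hw.2 hz.1 hz.2
  rw [e, f]
end

section
/- The space (ℝ², d*) is externally convex: for all x, y ∈ ℝ² with x ≠ y there exists a point z ∈ ℝ² with z ≠ y such that d*(x,y) + d*(y,z) = d*(x,z). -/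
/-- (ℝ², d*) is externally convex. -/
theorem river_externally_convex :
    ∀ x y : ℝ × ℝ, x ≠ y → ∃ z : ℝ × ℝ, z ≠ y ∧
      riverDist x y + riverDist y z = riverDist x z := by
  rintro ⟨a, b⟩ ⟨c, d⟩ h
  by_cases hac : a = c
  · subst hac
    have hbd : b ≠ d := fun e => h (by rw [e])
    refine ⟨(a, 2 * d - b), ?_, ?_⟩
    · intro e
      have e2 : 2 * d - b = d := congrArg Prod.snd e
      exact hbd (by linarith)
    · simp only [riverDist, if_true]
      have h1 : d - (2 * d - b) = b - d := by ring
      have h2 : b - (2 * d - b) = 2 * (b - d) := by ring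
      rw [h1, h2, abs_mul, abs_two]
      ring
  · rcases le_or_gt 0 d with hd | hd
    · refine ⟨(c, d + 1), ?_, ?_⟩
      · intro e
        have e2 : d + 1 = d := congrArg Prod.snd e
        linarith
      · simp only [riverDist, if_true, if_neg hac]
        have h1 : d - (d + 1) = -1 := by ring
        rw [h1, abs_neg, abs_one, abs_of_nonneg hd, abs_of_nonneg (by linarith : 0 ≤ d + 1)]
        ring
    · refine ⟨(c, d - 1), ?_, ?_⟩
      · intro e
        have e2 : d - 1 = d := congrArg Prod.snd e
        linarith
      · simp only [riverDist, if_true, if_neg hac]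
        have h1 : d - (d - 1) = 1 := by ring
        rw [h1, abs_one, abs_of_neg hd, abs_of_neg (by linarith : d - 1 < 0)]
        ring
end

section
/- On (ℝ², d*), the modulus of noncompact convexity with respect to the Hausdorff measure of noncompactness χ satisfies Δ_{ℝ²,χ}(ε) = ε for every ε ∈ (0, 1], where Δ_{ℝ²,χ}(ε) = inf{1 − d*((0,0), A) : A a nonempty closed convex subset of the closed unit ball B̄((0,0),1) with χ(A) ≥ ε} and d*((0,0),A) = inf{d*((0,0),v) : v ∈ A}. -/
/-- The river diameter of a set. -/
noncomputable def riverDiam (D : Set (ℝ × ℝ)) : ℝ :=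
  sSup {r : ℝ | ∃ u ∈ D, ∃ v ∈ D, riverDist u v = r}

/-- `A` is closed for the topology of the river metric. -/
def IsRiverClosed (A : Set (ℝ × ℝ)) : Prop :=
  ∀ p : ℝ × ℝ, p ∉ A → ∃ r > (0:ℝ), ∀ q ∈ A, r ≤ riverDist p q

/-- Distance from a point to a set, for the river metric. -/
noncomputable def riverDistToSet (p : ℝ × ℝ) (A : Set (ℝ × ℝ)) : ℝ :=
  sInf {d : ℝ | ∃ v ∈ A, riverDist p v = d}

/-- The closed unit ball around the origin for the river metric. -/
def riverClosedUnitBall : Set (ℝ × ℝ) :=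
  {v : ℝ × ℝ | riverDist v (0, 0) ≤ 1}

/-- The Hausdorff measure of noncompactness for the river metric. -/
noncomputable def hausdorffMNC (D : Set (ℝ × ℝ)) : ℝ :=
  sInf {ε : ℝ | 0 < ε ∧ ∃ c : Finset (ℝ × ℝ),
    D ⊆ ⋃ p ∈ c, {v : ℝ × ℝ | riverDist p v ≤ ε}}

/-- The modulus of noncompact convexity of (ℝ², d*) with respect to the
Hausdorff measure of noncompactness. -/
noncomputable def riverDeltaChi (ε : ℝ) : ℝ :=
  sInf {t : ℝ | ∃ A : Set (ℝ × ℝ), A.Nonempty ∧ A ⊆ riverClosedUnitBall ∧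
    IsRiverClosed A ∧ IsRiverConvex A ∧ ε ≤ hausdorffMNC A ∧
    t = 1 - riverDistToSet (0, 0) A}

lemma river_zero (v : ℝ × ℝ) : riverDist v (0, 0) = |v.1| + |v.2| := by
  unfold riverDist
  split_ifs with h
  · simp at h; simp [h]
  · simp; ring

lemma river_zero' (v : ℝ × ℝ) : riverDist (0, 0) v = |v.1| + |v.2| := by
  unfold riverDist
  split_ifs with h
  · simp at h; simp [← h]
  · simp; ring

lemma river_net (δ : ℝ) (hδ : 0 < δ) : ∃ t : Finset ℝ, ∀ x : ℝ, |x| ≤ 1 →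
    ∃ c ∈ t, |c - x| ≤ δ := by
  obtain ⟨t, -, ht, hc⟩ := (isCompact_Icc (a := (-1:ℝ)) (b := 1)).finite_cover_balls hδ
  refine ⟨ht.toFinset, fun x hx => ?_⟩
  have := hc (abs_le.mp hx)
  simp only [Set.mem_iUnion, Metric.mem_ball, Real.dist_eq] at this
  obtain ⟨c, hc, h⟩ := this
  exact ⟨c, by simpa using hc, by rw [abs_sub_comm]; exact h.le⟩

lemma river_mnc_le {D : Set (ℝ × ℝ)} {r : ℝ} (hr : 0 < r) (c : Finset (ℝ × ℝ))
    (h : ∀ v ∈ D, ∃ p ∈ c, riverDist p v ≤ r) : hausdorffMNC D ≤ r := by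
  refine csInf_le ⟨0, fun x hx => hx.1.le⟩ ⟨hr, c, fun v hv => ?_⟩
  obtain ⟨p, hp, h⟩ := h v hv
  simp only [Set.mem_iUnion]
  exact ⟨p, hp, h⟩

lemma river_lower (ε : ℝ) (h0 : 0 < ε) (A : Set (ℝ × ℝ)) (hne : A.Nonempty)
    (hb : A ⊆ riverClosedUnitBall) (hconv : IsRiverConvex A) (hm : ε ≤ hausdorffMNC A) :
    ε ≤ 1 - riverDistToSet (0, 0) A := by
  have hd : ∀ v ∈ A, riverDistToSet (0, 0) A ≤ |v.1| + |v.2| := by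
    intro v hv
    refine csInf_le ⟨0, ?_⟩ ⟨v, hv, river_zero' v⟩
    rintro _ ⟨w, -, rfl⟩
    rw [river_zero']; positivity
  have hb' : ∀ v ∈ A, |v.1| + |v.2| ≤ 1 := by
    intro v hv
    have := hb hv
    rwa [riverClosedUnitBall, Set.mem_setOf_eq, river_zero] at this
  generalize riverDistToSet (0, 0) A = d at *
  by_contra! hlt
  obtain ⟨u, hu⟩ := hne
  have hd1 : d ≤ 1 := (hd u hu).trans (hb' u hu)
  classical
  by_cases hs : ∀ v ∈ A, v.1 = u.1
  · obtain ⟨t, ht⟩ := river_net (ε / 2) (by linarith)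
    have := river_mnc_le (D := A) (r := ε / 2) (by linarith) (t.image fun y => (u.1, y)) (by
      intro v hv
      obtain ⟨c, hc, h⟩ := ht v.2 (by have := hb' v hv; have := abs_nonneg v.1; linarith)
      refine ⟨(u.1, c), Finset.mem_image.mpr ⟨c, hc, rfl⟩, ?_⟩
      simpa [riverDist, hs v hv] using h)
    linarith
  · push Not at hs
    obtain ⟨w, hw, hwu⟩ := hs
    have hx : ∀ v ∈ A, d ≤ |v.1| := by
      intro v hv
      have : ∃ w ∈ A, w.1 ≠ v.1 := by
        by_cases h : v.1 = u.1
        · exact ⟨w, hw, by rwa [h]⟩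
        · exact ⟨u, hu, fun h' => h h'.symm⟩
      obtain ⟨w, hw, hwv⟩ := this
      have hz : (v.1, (0:ℝ)) ∈ A := by
        apply hconv v hv w hw
        simp [riverSegment, riverDist, Ne.symm hwv]
        ring
      simpa using hd _ hz
    obtain ⟨t, ht⟩ := river_net ((ε - (1 - d)) / 2) (by linarith)
    have := river_mnc_le (D := A) (r := (ε + (1 - d)) / 2) (by linarith)
      (t.image fun y => (y, 0)) (by
      intro v hv
      have h1 := hb' v hv
      have h2 := hx v hv
      obtain ⟨c, hc, h⟩ := ht v.1 (by have := abs_nonneg v.2; linarith)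
      refine ⟨(c, 0), Finset.mem_image.mpr ⟨c, hc, rfl⟩, ?_⟩
      have : riverDist (c, 0) v ≤ |v.2| + |c - v.1| := by
        unfold riverDist
        split_ifs <;> simp
      linarith)
    linarith

def riverWit (ε : ℝ) : Set (ℝ × ℝ) := {v | 1 - ε ≤ v.1 ∧ |v.1| + |v.2| ≤ 1}

lemma riverWit_closed (ε : ℝ) : IsRiverClosed (riverWit ε) := by
  intro p hp
  by_cases h : 1 - ε ≤ p.1
  · have h2 : 1 < |p.1| + |p.2| := by
      by_contra! h2
      exact hp ⟨h, h2⟩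
    refine ⟨|p.1| + |p.2| - 1, by linarith, ?_⟩
    rintro q ⟨-, hq⟩
    unfold riverDist
    split_ifs with he
    · have := abs_sub_abs_le_abs_sub p.2 q.2
      rw [he]; linarith
    · have := abs_sub_abs_le_abs_sub p.1 q.1
      have := abs_nonneg q.2
      linarith
  · push Not at h
    refine ⟨1 - ε - p.1, by linarith, ?_⟩
    rintro q ⟨hq, -⟩
    unfold riverDist
    split_ifs with he
    · linarith
    · have := neg_abs_le (p.1 - q.1)
      have := abs_nonneg q.2
      have := abs_nonneg p.2
      linarith

lemma riverWit_convex (ε : ℝ) (h1 : ε ≤ 1) : IsRiverConvex (riverWit ε) := by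
  rintro ⟨a, b⟩ ⟨hu, hu'⟩ ⟨c, d⟩ ⟨hv, hv'⟩ ⟨x, y⟩ hz
  simp only [riverSegment, riverDist, Set.mem_setOf_eq] at hz hu hu' hv hv'
  simp only [riverWit, Set.mem_setOf_eq]
  have A1 := abs_nonneg b
  have A2 := abs_nonneg d
  have A3 := abs_nonneg y
  have A4 := abs_nonneg (a - x)
  have A5 := abs_nonneg (x - c)
  have ha : |a| = a := abs_of_nonneg (by linarith)
  have hc : |c| = c := abs_of_nonneg (by linarith)
  by_cases hac : a = c
  · by_cases hax : a = x
    · subst hac; subst hax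
      simp only [if_true] at hz
      refine ⟨hu, ?_⟩
      have : |y| ≤ max |b| |d| := by
        rw [le_max_iff]
        grind
      rcases le_max_iff.mp this with h | h <;> linarith
    · subst hac
      simp only [if_true, if_neg hax, if_neg (Ne.symm hax)] at hz
      have := abs_sub b d
      have : 0 < |a - x| := abs_pos.mpr (sub_ne_zero.mpr hax)
      linarith
  · by_cases hax : a = x
    · subst hax
      simp only [if_true, if_neg hac] at hz
      refine ⟨hu, ?_⟩
      have := abs_nonneg (b - y)
      linarith
    · by_cases hxc : x = c
      · subst hxc
        simp only [if_true, if_neg hac] at hz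
        refine ⟨hv, ?_⟩
        have := abs_nonneg (y - d)
        linarith
      · simp only [if_neg hac, if_neg hax, if_neg hxc] at hz
        have := abs_sub_le a x c
        have hy : |y| = 0 := by linarith
        have hx : 1 - ε ≤ x := by grind
        have hx' : |x| = x := abs_of_nonneg (by linarith)
        refine ⟨hx, ?_⟩
        rw [hx', hy]
        grind

lemma riverWit_mnc (ε : ℝ) (h1 : ε ≤ 1) : ε ≤ hausdorffMNC (riverWit ε) := by
  refine le_csInf ⟨1, one_pos, {(0, 0)}, ?_⟩ ?_
  · rintro v ⟨-, hv⟩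
    simpa [river_zero'] using hv
  · rintro r ⟨hr, c, hc⟩
    by_contra! hlt
    classical
    obtain ⟨x, ⟨hx1, hx2⟩, hx⟩ := (Set.Ioo_infinite (show 1 - ε < 1 - r by linarith)).exists_notMem_finset
      (c.image Prod.fst)
    have hmem : (x, 1 - x) ∈ riverWit ε := by
      refine ⟨hx1.le, ?_⟩
      simp only
      rw [abs_of_nonneg (by linarith), abs_of_nonneg (by linarith)]
      linarith
    have := hc hmem
    simp only [Set.mem_iUnion] at this
    obtain ⟨p, hp, h⟩ := this
    have hne : p.1 ≠ x := fun h => hx (Finset.mem_image.mpr ⟨p, hp, h⟩)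
    simp only [riverDist, Set.mem_setOf_eq, if_neg hne] at h
    have := abs_nonneg p.2
    have := abs_nonneg (p.1 - x)
    have := le_abs_self (1 - x)
    linarith

theorem river_modulus_hausdorff (ε : ℝ) (h0 : 0 < ε) (h1 : ε ≤ 1) :
    riverDeltaChi ε = ε := by
  have hmem : ((1 - ε, 0) : ℝ × ℝ) ∈ riverWit ε := by
    refine ⟨le_rfl, ?_⟩
    simp only [abs_zero]
    rw [abs_of_nonneg (by linarith)]; linarith
  have hl : IsLeast {t : ℝ | ∃ A : Set (ℝ × ℝ), A.Nonempty ∧ A ⊆ riverClosedUnitBall ∧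
    IsRiverClosed A ∧ IsRiverConvex A ∧ ε ≤ hausdorffMNC A ∧
    t = 1 - riverDistToSet (0, 0) A} ε := by
    constructor
    · refine ⟨riverWit ε, ⟨_, hmem⟩, ?_, riverWit_closed ε, riverWit_convex ε h1,
        riverWit_mnc ε h1, ?_⟩
      · rintro v ⟨-, hv⟩
        rwa [riverClosedUnitBall, Set.mem_setOf_eq, river_zero]
      · have : IsLeast {d : ℝ | ∃ v ∈ riverWit ε, riverDist (0, 0) v = d} (1 - ε) := by
          constructor
          · refine ⟨_, hmem, ?_⟩
            rw [river_zero']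
            simp only [abs_zero]
            rw [abs_of_nonneg (by linarith)]; linarith
          · rintro _ ⟨v, ⟨hv, -⟩, rfl⟩
            rw [river_zero']
            have := le_abs_self v.1
            have := abs_nonneg v.2
            linarith
        rw [riverDistToSet, this.csInf_eq]; ring
    · rintro _ ⟨A, hne, hb, -, hconv, hm, rfl⟩
      exact river_lower ε h0 A hne hb hconv hm
  exact hl.csInf_eq
end
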